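/- (Closed-form mean-field solution.) Let x, y, z be real numbers with 0 < r < 1 where r = √(x² + y² + z²), and set θ^x = x·arctanh(r)/r, θ^y = y·arctanh(r)/r, θ^z = z·arctanh(r)/r. Then the single-qubit Gibbs state ρ = exp(θ^x·σx + θ^y·σy + θ^z·σz)/Tr[exp(θ^x·σx + θ^y·σy + θ^z·σz)] reproduces the target expectation values exactly: Tr[ρ·σx] = x, Tr[ρ·σy] = y, and Tr[ρ·σz] = z. -/

import Mathlib

/-!
Write `u · σ` for the combination of Pauli matrices with coefficient vector `u`. When `u` is a unit
vector, `u · σ` is a traceless involution, so the exponential series of `t (u · σ)` splits into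
`cosh t + sinh t (u · σ)` and normalising gives the Gibbs state `(1 + tanh t (u · σ)) / 2`. The
state with Bloch vector `v = r u` is therefore reached at `t = arctanh r`, and orthogonality of the
Pauli matrices under the trace reads the coordinates of `v` off as expectation values.
-/

namespace Pauli18

/-- The Pauli matrix `σx`. -/
def σx : Matrix (Fin 2) (Fin 2) ℂ := !![0, 1; 1, 0]

/-- The Pauli matrix `σy`. -/
def σy : Matrix (Fin 2) (Fin 2) ℂ := !![0, -Complex.I; Complex.I, 0]

/-- The Pauli matrix `σz`. -/
def σz : Matrix (Fin 2) (Fin 2) ℂ := !![1, 0; 0, -1]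

/-- The inverse hyperbolic tangent, `arctanh r = ½·log((1+r)/(1−r))`. -/
noncomputable def arctanh (r : ℝ) : ℝ := Real.log ((1 + r) / (1 - r)) / 2

open Matrix

theorem exp_smul_of_mul_self_eq_one {A : Type*} [Ring A] [Algebra ℝ A] [TopologicalSpace A]
    [IsTopologicalRing A] [ContinuousSMul ℝ A] [T2Space A] {a : A} (ha : a * a = 1) (t : ℝ) :
    NormedSpace.exp (t • a) = Real.cosh t • (1 : A) + Real.sinh t • a := by
  have a_pow_even (n : ℕ) : a ^ (2 * n) = 1 := by rw [pow_mul, pow_two, ha, one_pow]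
  have a_pow_odd (n : ℕ) : a ^ (2 * n + 1) = a := by rw [pow_succ, a_pow_even, one_mul]
  rw [NormedSpace.exp_eq_tsum ℝ]
  refine (HasSum.even_add_odd ?_ ?_).tsum_eq
  · simpa only [smul_pow, a_pow_even, smul_smul, div_eq_inv_mul] using
      (Real.hasSum_cosh t).smul_const (1 : A)
  · simpa only [smul_pow, a_pow_odd, smul_smul, div_eq_inv_mul] using
      (Real.hasSum_sinh t).smul_const a

theorem arctanh_eq_artanh {r : ℝ} (hr : r ∈ Set.Icc (-1) 1) : arctanh r = Real.artanh r := by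
  rw [arctanh, Real.artanh_eq_half_log hr, one_div_mul_eq_div]

theorem tanh_arctanh {r : ℝ} (hr : r ∈ Set.Ioo (-1) 1) : Real.tanh (arctanh r) = r := by
  rw [arctanh_eq_artanh (Set.Ioo_subset_Icc_self hr), Real.tanh_artanh hr]

section GibbsState

variable {n : Type*} [Fintype n] [DecidableEq n]

/-- The Gibbs state `exp H / Tr (exp H)` of the matrix `H`. The inverse temperature and the minus
sign of the Boltzmann weight are absorbed into `H`. -/
noncomputable def gibbsState (H : Matrix n n ℂ) : Matrix n n ℂ :=
  (NormedSpace.exp H).trace⁻¹ • NormedSpace.exp H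

theorem gibbsState_smul_of_mul_self_eq_one {N : Matrix n n ℂ} (hN : N * N = 1)
    (htr : N.trace = 0) (t : ℝ) :
    gibbsState (t • N) = (Fintype.card n : ℂ)⁻¹ • (1 + Real.tanh t • N) := by
  have cosh_ne_zero : Real.cosh t ≠ 0 := (Real.cosh_pos t).ne'
  have exp_eq : NormedSpace.exp (t • N) = (Real.cosh t : ℂ) • (1 + Real.tanh t • N) := by
    rw [exp_smul_of_mul_self_eq_one hN, Complex.coe_smul, smul_add, smul_smul,
      Real.tanh_eq_sinh_div_cosh, mul_div_cancel₀ _ cosh_ne_zero]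
  have trace_exp : (NormedSpace.exp (t • N)).trace = Real.cosh t * Fintype.card n := by
    rw [exp_eq, trace_smul, trace_add, trace_one, trace_smul, htr, smul_zero, add_zero, smul_eq_mul]
  rw [gibbsState, trace_exp, exp_eq, smul_smul, _root_.mul_inv_rev,
    inv_mul_cancel_right₀ (Complex.ofReal_ne_zero.2 cosh_ne_zero)]

end GibbsState

/-- The real-linear combination `v · σ = v₀ σx + v₁ σy + v₂ σz` of the Pauli matrices; it serves
both as a single-qubit Hamiltonian and as the observable measuring the spin along `v`. -/
noncomputable def pauliDot : (Fin 3 → ℝ) →ₗ[ℝ] Matrix (Fin 2) (Fin 2) ℂ :=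
  Fintype.linearCombination ℝ ![σx, σy, σz]

theorem pauliDot_apply (v : Fin 3 → ℝ) : pauliDot v = v 0 • σx + v 1 • σy + v 2 • σz :=
  Fin.sum_univ_three fun i ↦ v i • ![σx, σy, σz] i

theorem pauliDot_single_one (i : Fin 3) : pauliDot (Pi.single i 1) = ![σx, σy, σz] i := by
  rw [pauliDot, Fintype.linearCombination_apply_single, one_smul]

theorem trace_pauliDot (v : Fin 3 → ℝ) : (pauliDot v).trace = 0 := by
  simp [pauliDot_apply, σx, σy, σz, trace_fin_two]

theorem pauliDot_mul_pauliDot (v w : Fin 3 → ℝ) :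
    pauliDot v * pauliDot w = (v ⬝ᵥ w) • 1 + Complex.I • pauliDot (v ⨯₃ w) := by
  ext i j
  fin_cases i <;> fin_cases j <;> apply Complex.ext <;>
    simp [pauliDot_apply, σx, σy, σz, cross_apply, vec3_dotProduct, mul_apply, Fin.sum_univ_two] <;>
    ring

theorem pauliDot_mul_self (v : Fin 3 → ℝ) : pauliDot v * pauliDot v = (v ⬝ᵥ v) • 1 := by
  rw [pauliDot_mul_pauliDot, cross_self, map_zero, smul_zero, add_zero]

theorem trace_pauliDot_mul_pauliDot (v w : Fin 3 → ℝ) :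
    (pauliDot v * pauliDot w).trace = 2 * (v ⬝ᵥ w : ℝ) := by
  simp [pauliDot_mul_pauliDot, trace_pauliDot, mul_comm]

/-- The single-qubit state with Bloch vector `v`. Nothing forces `v` into the unit ball, so the
matrix need not be positive semidefinite. -/
noncomputable def blochState (v : Fin 3 → ℝ) : Matrix (Fin 2) (Fin 2) ℂ :=
  (2 : ℂ)⁻¹ • (1 + pauliDot v)

theorem trace_blochState_mul_pauliDot (v w : Fin 3 → ℝ) :
    (blochState v * pauliDot w).trace = (v ⬝ᵥ w : ℝ) := by
  rw [blochState, smul_mul, trace_smul, add_mul, one_mul, trace_add, trace_pauliDot, zero_add,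
    trace_pauliDot_mul_pauliDot, smul_eq_mul, inv_mul_cancel_left₀ two_ne_zero]

theorem gibbsState_pauliDot_arctanh_div_smul {v : Fin 3 → ℝ} {r : ℝ} (hv : v ⬝ᵥ v = r ^ 2)
    (hr0 : r ≠ 0) (hr : r ∈ Set.Ioo (-1) 1) :
    gibbsState (pauliDot ((arctanh r / r) • v)) = blochState v := by
  have unit_mul_self : pauliDot (r⁻¹ • v) * pauliDot (r⁻¹ • v) = 1 := by
    rw [pauliDot_mul_self, smul_dotProduct, dotProduct_smul, hv, smul_eq_mul, smul_eq_mul, pow_two,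
      inv_mul_cancel_left₀ hr0, inv_mul_cancel₀ hr0, one_smul]
  rw [div_eq_mul_inv, ← smul_smul, map_smul,
    gibbsState_smul_of_mul_self_eq_one unit_mul_self (trace_pauliDot _),
    tanh_arctanh hr, ← map_smul, smul_inv_smul₀ hr0, Fintype.card_fin,
    Nat.cast_ofNat, blochState]

/-- **Closed-form mean-field solution.** For target expectation values `x, y, z` with
`0 < r < 1`, `r = √(x² + y² + z²)`, the parameters `θ^k = (k/r)·arctanh r` (for
`k = x, y, z`) produce a single-qubit Gibbs state that reproduces the targets exactly. -/
theorem mean_field_closed_form (x y z : ℝ) (r : ℝ)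
    (hr : r = Real.sqrt (x ^ 2 + y ^ 2 + z ^ 2)) (hr0 : 0 < r) (hr1 : r < 1)
    (θx θy θz : ℝ)
    (hθx : θx = x * arctanh r / r)
    (hθy : θy = y * arctanh r / r)
    (hθz : θz = z * arctanh r / r)
    (ρ : Matrix (Fin 2) (Fin 2) ℂ)
    (hρ : ρ = ((NormedSpace.exp (θx • σx + θy • σy + θz • σz)).trace)⁻¹ •
      NormedSpace.exp (θx • σx + θy • σy + θz • σz)) :
    (ρ * σx).trace.re = x ∧ (ρ * σy).trace.re = y ∧ (ρ * σz).trace.re = z := by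
  have hv : ![x, y, z] ⬝ᵥ ![x, y, z] = r ^ 2 := by
    rw [hr, Real.sq_sqrt (by positivity), vec3_dotProduct]
    simp [pow_two]
  have hamiltonian_eq :
      θx • σx + θy • σy + θz • σz = pauliDot ((arctanh r / r) • ![x, y, z]) := by
    simp [pauliDot_apply, hθx, hθy, hθz, mul_div_assoc, mul_comm]
  have ρ_eq : ρ = blochState ![x, y, z] := by
    rw [hρ, hamiltonian_eq, ← gibbsState,
      gibbsState_pauliDot_arctanh_div_smul hv hr0.ne' ⟨by linarith, hr1⟩]
  have expectation (i : Fin 3) : (ρ * ![σx, σy, σz] i).trace.re = ![x, y, z] i := by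
    rw [ρ_eq, ← pauliDot_single_one, trace_blochState_mul_pauliDot, Complex.ofReal_re,
      dotProduct_single_one]
  exact ⟨expectation 0, expectation 1, expectation 2⟩

end Pauli18
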